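/- There exists N such that for all n ≥ N the following holds for D = {i : 1 ≤ i ≤ 2^{n+1} − 3, i odd}: every irreducible solution U of length ℓ for D satisfies n·s(U) ≥ ℓ, and the irreducible solutions U with n·s(U) = ℓ (i.e. of minimal density 1/n) are exactly, up to shift, the following two: (1) the solution of length n with u_{2^n−1} = 1 and u_d = 0 for all other d ∈ D; (2) the solution of length 2n with u_{2^{n+1}−3} = 2^{n−1}, u_{3·2^{n−1}−1} = 1, and u_d = 0 for all other d ∈ D (note 2^{n−1}(2^{n+1}−3) + (3·2^{n−1}−1) = 2^{2n} − 1). -/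

import Mathlib

/-- The binary weight `s₂(m)`: the sum of the base-2 digits of `m`. -/
def s2 (m : ℕ) : ℕ := (Nat.digits 2 m).sum

/-- The shift map on `{0, …, 2^ℓ - 1}`: it fixes `2^ℓ - 1` and sends any other `i`
to the remainder of `2·i` modulo `2^ℓ - 1`. -/
def shift2 (ℓ i : ℕ) : ℕ := if i = 2 ^ ℓ - 1 then i else (2 * i) % (2 ^ ℓ - 1)

/-- `U : ℕ → ℕ` (supported on `D`) is a solution of length `ℓ` for `D`:
`0 ≤ u_d ≤ 2^ℓ - 1` and `∑ d·u_d` is a positive multiple of `2^ℓ - 1`. -/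
structure IsSolution (D : Finset ℕ) (ℓ : ℕ) (U : ℕ → ℕ) : Prop where
  len_pos : 1 ≤ ℓ
  bounded : ∀ d, U d ≤ 2 ^ ℓ - 1
  supp_sub : ∀ d, d ∉ D → U d = 0
  dvd : (2 ^ ℓ - 1) ∣ ∑ d ∈ D, d * U d
  pos : 0 < ∑ d ∈ D, d * U d

/-- The weight `s(U) = ∑_{d ∈ D} s₂(u_d)` of a solution. -/
def weight (D : Finset ℕ) (U : ℕ → ℕ) : ℕ := ∑ d ∈ D, s2 (U d)

/-- The support map `φ_U(k) = (∑_{d ∈ D} d·δ^k(u_d)) / (2^ℓ - 1)` of a solution,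
viewed as an `ℓ`-periodic function on `ℕ`. -/
def supportMap (D : Finset ℕ) (ℓ : ℕ) (U : ℕ → ℕ) (k : ℕ) : ℕ :=
  (∑ d ∈ D, d * (shift2 ℓ)^[k] (U d)) / (2 ^ ℓ - 1)

/-- A solution is irreducible when its support map is injective on `ℤ/ℓℤ`,
i.e. injective on `{0, …, ℓ-1}`. -/
def IrreducibleSol (D : Finset ℕ) (ℓ : ℕ) (U : ℕ → ℕ) : Prop :=
  Set.InjOn (supportMap D ℓ U) ↑(Finset.range ℓ)

/-- `U` is a shift of `V` (coordinatewise iterate of the shift map). -/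
def IsShiftOf (ℓ : ℕ) (U V : ℕ → ℕ) : Prop :=
  ∃ k, ∀ d, U d = (shift2 ℓ)^[k] (V d)

/-- The set of odd integers `1 ≤ i ≤ d`. -/
def oddUpTo (d : ℕ) : Finset ℕ := (Finset.range (d + 1)).filter (fun i => i % 2 = 1)

/-- `D = {i : 1 ≤ i ≤ 2^{n+1} - 3, i odd}`. -/
def oddD (n : ℕ) : Finset ℕ := oddUpTo (2 ^ (n + 1) - 3)

/-- The solution with `u_a = 1` and all other coordinates `0`. -/
def sol1 (a : ℕ) : ℕ → ℕ := fun d => if d = a then 1 else 0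

/-- The solution with `u_a = x`, `u_b = y` and all other coordinates `0`. -/
def sol2 (a x b y : ℕ) : ℕ → ℕ := fun d => if d = a then x else if d = b then y else 0

/-- The solution with `u_a = x`, `u_b = y`, `u_c = z` and all other coordinates `0`. -/
def sol3 (a x b y c z : ℕ) : ℕ → ℕ :=
  fun d => if d = a then x else if d = b then y else if d = c then z else 0

/-!
Let `φ` be the support map of a solution and `W k` the set of `d` whose coordinate has leading
digit `1` after `k` shifts. Doubling gives `2 φ(k) - 1 = (φ(k + 1) - 1) + ∑ d ∈ W k, d`. Since
`s₂(2 φ(k) - 1) = s₂(φ(k) - 1) + 1` and `s₂` is subadditive, summing over a period telescopes to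
`ℓ ≤ ∑ s₂(d) s₂(u_d)`, which is at most `n s(U)` because every `d ∈ D` has `s₂(d) ≤ n`.

In the case of equality all these additions are carry-free. As `D` consists of odd numbers, each
`W k` has at most one element, and this element has a single digit `0` among its `n + 1` digits, so
`φ(k + 1) - 1` is `0` or the corresponding power of two. Hence `φ` can only double, fall from
`2 ^ n - 2 ^ i` to `1`, or fall from `2 ^ n` to `2 ^ (i + 1) + 1` for some `i < n`. It must visit
`1`, and its returns to `1` are the cycles `1, 2, …, 2 ^ (n - 1)` and
`1, 2, …, 2 ^ n, 3, 6, …, 3 * 2 ^ (n - 2)`; an irreducible solution follows exactly one of them,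
once.
-/

open Finset

/-! ### Binary weight -/

theorem s2_two_mul_add (a : ℕ) {b : ℕ} (hb : b < 2) : s2 (2 * a + b) = s2 a + b := by
  rcases Nat.eq_zero_or_pos (2 * a + b) with h | h
  · obtain ⟨rfl, rfl⟩ : a = 0 ∧ b = 0 := by omega
    simp [s2]
  · rw [s2, Nat.digits_def' one_lt_two h, List.sum_cons, Nat.mul_add_mod, Nat.mod_eq_of_lt hb,
      Nat.mul_add_div two_pos, Nat.div_eq_of_lt hb, add_zero, add_comm, s2]

theorem s2_eq_s2_div_two_add_mod_two (m : ℕ) : s2 m = s2 (m / 2) + m % 2 := by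
  rw [← s2_two_mul_add _ (Nat.mod_lt m two_pos), Nat.div_add_mod]

theorem s2_zero : s2 0 = 0 := by simp [s2]

theorem s2_one : s2 1 = 1 := by simp [s2]

theorem s2_two_pow (k : ℕ) : s2 (2 ^ k) = 1 := by
  induction k with
  | zero => exact s2_one
  | succ k ih => rw [pow_succ', ← ih]; exact s2_two_mul_add (2 ^ k) two_pos

theorem eq_zero_of_s2_eq_zero {m : ℕ} (hm : s2 m = 0) : m = 0 := by
  induction m using Nat.strong_induction_on with
  | _ m ih =>
    rw [s2_eq_s2_div_two_add_mod_two] at hm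
    by_contra h0
    have := ih (m / 2) (by omega) (by omega)
    omega

theorem exists_eq_two_pow_of_s2_eq_one {m : ℕ} (hm : s2 m = 1) : ∃ k, m = 2 ^ k := by
  induction m using Nat.strong_induction_on with
  | _ m ih =>
    rw [s2_eq_s2_div_two_add_mod_two] at hm
    rcases Nat.mod_two_eq_zero_or_one m with h | h
    · have hpos : m ≠ 0 := by rintro rfl; simp [s2_zero] at hm
      obtain ⟨k, hk⟩ := ih (m / 2) (by omega) (by omega)
      exact ⟨k + 1, by rw [pow_succ]; omega⟩
    · have := eq_zero_of_s2_eq_zero (m := m / 2) (by omega)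
      exact ⟨0, by omega⟩

theorem s2_add_one_le (m : ℕ) : s2 (m + 1) ≤ s2 m + 1 := by
  induction m using Nat.strong_induction_on with
  | _ m ih =>
    rw [s2_eq_s2_div_two_add_mod_two m, s2_eq_s2_div_two_add_mod_two (m + 1)]
    rcases Nat.mod_two_eq_zero_or_one m with h | h
    · rw [show (m + 1) / 2 = m / 2 by omega]; omega
    · have := ih (m / 2) (by omega)
      rw [show (m + 1) / 2 = m / 2 + 1 by omega]; omega

theorem s2_add_le (a b : ℕ) : s2 (a + b) ≤ s2 a + s2 b := by
  induction a using Nat.strong_induction_on generalizing b with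
  | _ a ih =>
    rcases Nat.eq_zero_or_pos a with rfl | ha
    · simp [s2_zero]
    have hab := ih (a / 2) (by omega) (b / 2)
    have hcarry := s2_add_one_le (a / 2 + b / 2)
    rw [s2_eq_s2_div_two_add_mod_two a, s2_eq_s2_div_two_add_mod_two b,
      s2_eq_s2_div_two_add_mod_two (a + b)]
    by_cases h : a % 2 = 1 ∧ b % 2 = 1
    · rw [show (a + b) / 2 = a / 2 + b / 2 + 1 by omega]; omega
    · rw [show (a + b) / 2 = a / 2 + b / 2 by omega]; omega

theorem s2_add_lt_of_odd {a b : ℕ} (ha : Odd a) (hb : Odd b) : s2 (a + b) < s2 a + s2 b := by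
  rw [Nat.odd_iff] at ha hb
  have hab := s2_add_le (a / 2) (b / 2)
  have hcarry := s2_add_one_le (a / 2 + b / 2)
  rw [s2_eq_s2_div_two_add_mod_two a, s2_eq_s2_div_two_add_mod_two b,
    s2_eq_s2_div_two_add_mod_two (a + b), show (a + b) / 2 = a / 2 + b / 2 + 1 by omega]
  omega

theorem testBit_eq_false_of_s2_add_eq {a b i : ℕ} (h : s2 (a + b) = s2 a + s2 b)
    (hb : b.testBit i = true) : a.testBit i = false := by
  have hparity : ¬(a % 2 = 1 ∧ b % 2 = 1) := fun ⟨ha, hb⟩ =>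
    (s2_add_lt_of_odd (Nat.odd_iff.2 ha) (Nat.odd_iff.2 hb)).ne h
  induction i generalizing a b with
  | zero =>
    simp only [Nat.testBit_zero, decide_eq_true_eq, decide_eq_false_iff_not] at hb ⊢
    exact fun ha => hparity ⟨ha, hb⟩
  | succ i ih =>
    rw [Nat.testBit_succ] at hb ⊢
    rw [s2_eq_s2_div_two_add_mod_two a, s2_eq_s2_div_two_add_mod_two b,
      s2_eq_s2_div_two_add_mod_two (a + b), show (a + b) / 2 = a / 2 + b / 2 by omega] at h
    have hhalf : s2 (a / 2 + b / 2) = s2 (a / 2) + s2 (b / 2) := by omega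
    exact ih hhalf hb fun ⟨ha, hb⟩ =>
      (s2_add_lt_of_odd (Nat.odd_iff.2 ha) (Nat.odd_iff.2 hb)).ne hhalf

theorem s2_sum_le {ι : Type*} (s : Finset ι) (f : ι → ℕ) :
    s2 (∑ i ∈ s, f i) ≤ ∑ i ∈ s, s2 (f i) :=
  s.le_sum_of_subadditive s2 s2_zero.le s2_add_le f

theorem card_le_one_of_s2_add_sum_eq {ι : Type*} {s : Finset ι} {f : ι → ℕ} {x : ℕ}
    (hf : ∀ i ∈ s, Odd (f i))
    (h : s2 (x + ∑ i ∈ s, f i) = s2 x + ∑ i ∈ s, s2 (f i)) : #s ≤ 1 := by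
  classical
  by_contra! hs
  obtain ⟨i, hi, j, hj, hij⟩ := one_lt_card.1 hs
  have hlt := s2_add_lt_of_odd (hf i hi) (hf j hj)
  have hj' : j ∈ s.erase i := mem_erase.2 ⟨hij.symm, hj⟩
  rw [← add_sum_erase s f hi, ← add_sum_erase s (fun i => s2 (f i)) hi,
    ← add_sum_erase _ f hj', ← add_sum_erase _ (fun i => s2 (f i)) hj'] at h
  set rest := ∑ k ∈ (s.erase i).erase j, f k
  have hrest : s2 rest ≤ ∑ k ∈ (s.erase i).erase j, s2 (f k) := s2_sum_le _ f
  have hx := s2_add_le x (f i + (f j + rest))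
  have hfij := s2_add_le (f i + f j) rest
  rw [add_assoc] at hfij
  omega

theorem s2_eq_sum_testBit {ℓ u : ℕ} (hu : u < 2 ^ ℓ) :
    s2 u = ∑ i ∈ range ℓ, (u.testBit i).toNat := by
  induction ℓ generalizing u with
  | zero =>
    obtain rfl : u = 0 := by simpa using hu
    simp [s2_zero]
  | succ ℓ ih =>
    rw [s2_eq_s2_div_two_add_mod_two, ih (u := u / 2) (by rw [pow_succ] at hu; omega),
      sum_range_succ', Nat.toNat_testBit u 0, pow_zero, Nat.div_one]
    simp only [Nat.testBit_succ]

theorem s2_two_pow_sub_succ_add_s2 {m x : ℕ} (hx : x < 2 ^ m) :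
    s2 (2 ^ m - (x + 1)) + s2 x = m := by
  rw [s2_eq_sum_testBit hx, s2_eq_sum_testBit (Nat.sub_lt (by positivity) x.succ_pos),
    ← sum_add_distrib]
  trans ∑ _i ∈ range m, 1
  · refine sum_congr rfl fun i hi => ?_
    rw [Nat.testBit_two_pow_sub_succ hx, decide_eq_true (mem_range.1 hi)]
    cases x.testBit i <;> rfl
  · simp

/-! ### The shift map -/

theorem shift2_two_pow_mul_add {m a b : ℕ} (ha : a < 2 ^ m) (hb : b < 2) :
    shift2 (m + 1) (2 ^ m * b + a) = 2 * a + b := by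
  obtain rfl | rfl : b = 0 ∨ b = 1 := by omega
  · rw [shift2, if_neg (by omega), Nat.mod_eq_of_lt (by omega), mul_zero, zero_add, add_zero]
  · by_cases htop : a = 2 ^ m - 1
    · rw [shift2, if_pos (by omega)]; omega
    · rw [shift2, if_neg (by omega), Nat.mod_eq_sub_mod (by omega), Nat.mod_eq_of_lt (by omega)]
      omega

theorem shift2_iterate_two_pow_mul_add {m k a b : ℕ} (ha : a < 2 ^ m) (hb : b < 2 ^ k) :
    (shift2 (m + k))^[k] (2 ^ m * b + a) = 2 ^ k * a + b := by
  induction k generalizing m a b with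
  | zero => simp_all
  | succ k ih =>
    have hb0 : b / 2 ^ k < 2 := Nat.div_lt_of_lt_mul (by rwa [← pow_succ])
    have hsplit : 2 ^ m * b + a = 2 ^ (m + k) * (b / 2 ^ k) + (2 ^ m * (b % 2 ^ k) + a) := by
      conv_lhs => rw [← Nat.div_add_mod b (2 ^ k)]
      ring
    have hlow : 2 ^ m * (b % 2 ^ k) + a < 2 ^ (m + k) := by
      have : 2 ^ m * (b % 2 ^ k + 1) ≤ 2 ^ m * 2 ^ k :=
        Nat.mul_le_mul_left _ (Nat.mod_lt b (by positivity))
      rw [pow_add]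
      linarith
    have hregroup : 2 * (2 ^ m * (b % 2 ^ k) + a) + b / 2 ^ k =
        2 ^ (m + 1) * (b % 2 ^ k) + (2 * a + b / 2 ^ k) := by ring
    rw [Function.iterate_succ_apply, ← add_assoc m k 1, hsplit, shift2_two_pow_mul_add hlow hb0,
      hregroup, show m + k + 1 = m + 1 + k by omega,
      ih (by rw [pow_succ']; omega) (Nat.mod_lt b (by positivity))]
    conv_rhs => rw [← Nat.div_add_mod b (2 ^ k)]
    ring

theorem isPeriodicPt_shift2 {ℓ u : ℕ} (hu : u < 2 ^ ℓ) :
    Function.IsPeriodicPt (shift2 ℓ) ℓ u := by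
  simpa [Function.IsPeriodicPt, Function.IsFixedPt] using
    shift2_iterate_two_pow_mul_add (m := 0) (a := 0) (by simp) hu

theorem testBit_shift2_iterate {ℓ k u : ℕ} (hu : u < 2 ^ ℓ) (hk : k < ℓ) :
    ((shift2 ℓ)^[k] u).testBit (ℓ - 1) = u.testBit (ℓ - 1 - k) := by
  obtain ⟨m, rfl⟩ := Nat.exists_eq_add_of_le' hk
  have hlow : u % 2 ^ (m + 1) < 2 ^ (m + 1) := Nat.mod_lt u (by positivity)
  have hhigh : u / 2 ^ (m + 1) < 2 ^ k := Nat.div_lt_of_lt_mul (by rwa [← pow_add, add_right_comm])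
  have hiter := shift2_iterate_two_pow_mul_add hlow hhigh
  rw [Nat.div_add_mod] at hiter
  rw [show m + (k + 1) = m + 1 + k by omega, hiter, Nat.testBit_two_pow_mul_add _ hhigh,
    if_neg (by omega), show m + 1 + k - 1 - k = m by omega, Nat.testBit_mod_two_pow]
  simp

theorem shift2_lt_two_pow {ℓ u : ℕ} (hu : u < 2 ^ ℓ) : shift2 ℓ u < 2 ^ ℓ := by
  rw [shift2]
  split_ifs
  · exact hu
  · exact (Nat.mod_lt _ (by omega)).trans_le (Nat.sub_le _ _)

theorem shift2_add_testBit_mul {ℓ u : ℕ} (hℓ : 1 ≤ ℓ) (hu : u < 2 ^ ℓ) :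
    shift2 ℓ u + (u.testBit (ℓ - 1)).toNat * (2 ^ ℓ - 1) = 2 * u := by
  obtain ⟨m, rfl⟩ := Nat.exists_eq_add_of_le' hℓ
  have hb : u / 2 ^ m < 2 := Nat.div_lt_of_lt_mul (by rwa [← pow_succ])
  have hshift := shift2_two_pow_mul_add (Nat.mod_lt u (by positivity : 0 < 2 ^ m)) hb
  rw [Nat.div_add_mod] at hshift
  rw [hshift, Nat.add_sub_cancel, Nat.toNat_testBit, Nat.mod_eq_of_lt hb]
  have hdecomp := Nat.div_add_mod u (2 ^ m)
  generalize u % 2 ^ m = a, u / 2 ^ m = b at *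
  obtain rfl | rfl : b = 0 ∨ b = 1 := by omega
  all_goals omega

theorem shift2_zero (ℓ : ℕ) : shift2 ℓ 0 = 0 := by simp [shift2]

theorem shift2_pos {ℓ u : ℕ} (hℓ : 1 ≤ ℓ) (hu : u < 2 ^ ℓ) (hpos : 0 < u) : 0 < shift2 ℓ u := by
  have hpow : 2 ^ ℓ = 2 * 2 ^ (ℓ - 1) := by rw [← pow_succ', Nat.sub_add_cancel hℓ]
  have hshift := shift2_add_testBit_mul hℓ hu
  cases hb : u.testBit (ℓ - 1) <;> rw [hb] at hshift
  · rw [Bool.toNat_false] at hshift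
    omega
  · rw [Bool.toNat_true] at hshift
    omega

theorem sum_range_comp_succ_of_eq {M : Type*} [AddCommMonoid M] {f : ℕ → M} {ℓ : ℕ}
    (hf : f ℓ = f 0) : ∑ k ∈ range ℓ, f (k + 1) = ∑ k ∈ range ℓ, f k := by
  cases ℓ with
  | zero => simp
  | succ ℓ => rw [sum_range_succ, hf, sum_range_succ' f]

theorem eq_two_pow_mul_of_double {v : ℕ → ℕ} {k a : ℕ}
    (h : ∀ j < a, v (k + j + 1) = 2 * v (k + j)) : v (k + a) = 2 ^ a * v k := by
  induction a with
  | zero => simp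
  | succ a ih =>
    rw [← add_assoc, h a (Nat.lt_succ_self a), ih fun j hj => h j (by omega), pow_succ']
    ring

/-! ### Wrap sets and the density bound -/

/-- The elements `d ∈ D` whose coordinate `u_d` has a leading binary digit `1` after `k` shifts,
that is, those for which the next shift subtracts `2 ^ ℓ - 1` from the doubled coordinate. -/
def wrapSet (D : Finset ℕ) (ℓ : ℕ) (U : ℕ → ℕ) (k : ℕ) : Finset ℕ :=
  {d ∈ D | ((shift2 ℓ)^[k] (U d)).testBit (ℓ - 1)}

section Solutions

variable {D : Finset ℕ} {ℓ : ℕ} {U V : ℕ → ℕ}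

theorem two_mul_sum_mul_eq (hℓ : 1 ≤ ℓ) (hU : ∀ d, U d < 2 ^ ℓ) :
    2 * ∑ d ∈ D, d * U d =
      ∑ d ∈ D, d * shift2 ℓ (U d) + (∑ d ∈ D with (U d).testBit (ℓ - 1), d) * (2 ^ ℓ - 1) := by
  rw [sum_filter, sum_mul, mul_sum, ← sum_add_distrib]
  refine sum_congr rfl fun d _ => ?_
  rw [mul_left_comm, ← shift2_add_testBit_mul hℓ (hU d)]
  cases (U d).testBit (ℓ - 1) <;> simp [mul_add]

theorem wrapSet_shift (j k : ℕ) :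
    wrapSet D ℓ (fun d => (shift2 ℓ)^[j] (U d)) k = wrapSet D ℓ U (k + j) := by
  simp only [wrapSet, Function.iterate_add_apply]

theorem ne_zero_of_mem_wrapSet {k d : ℕ} (hd : d ∈ wrapSet D ℓ U k) : U d ≠ 0 := by
  intro h0
  simp [wrapSet, h0, Function.iterate_fixed (shift2_zero ℓ)] at hd

theorem sum_s2_mul_s2_le_mul_weight {n : ℕ} (hn : ∀ d ∈ D, s2 d ≤ n) :
    ∑ d ∈ D, s2 d * s2 (U d) ≤ n * weight D U := by
  rw [weight, mul_sum]
  exact sum_le_sum fun d hd => Nat.mul_le_mul_right _ (hn d hd)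

namespace IsSolution

theorem lt_two_pow (h : IsSolution D ℓ U) (d : ℕ) : U d < 2 ^ ℓ :=
  (Nat.le_sub_one_iff_lt (by positivity)).1 (h.bounded d)

theorem two_pow_sub_one_pos (h : IsSolution D ℓ U) : 0 < 2 ^ ℓ - 1 :=
  Nat.sub_pos_of_lt (Nat.one_lt_two_pow (Nat.one_le_iff_ne_zero.1 h.len_pos))

theorem shift (h : IsSolution D ℓ U) : IsSolution D ℓ (fun d => shift2 ℓ (U d)) where
  len_pos := h.len_pos
  bounded d := Nat.le_sub_one_of_lt (shift2_lt_two_pow (h.lt_two_pow d))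
  supp_sub d hd := by rw [h.supp_sub d hd, shift2_zero]
  dvd := by
    have hdvd := h.dvd.mul_left 2
    rw [two_mul_sum_mul_eq h.len_pos h.lt_two_pow] at hdvd
    exact (Nat.dvd_add_iff_left (dvd_mul_left _ _)).2 hdvd
  pos := by
    obtain ⟨d, hd, hne⟩ := exists_ne_zero_of_sum_ne_zero h.pos.ne'
    obtain ⟨hd0, hU0⟩ := mul_ne_zero_iff.1 hne
    exact sum_pos' (fun _ _ => Nat.zero_le _)
      ⟨d, hd, Nat.mul_pos (Nat.pos_of_ne_zero hd0)
        (shift2_pos h.len_pos (h.lt_two_pow d) (Nat.pos_of_ne_zero hU0))⟩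

theorem shift_iterate (h : IsSolution D ℓ U) (k : ℕ) :
    IsSolution D ℓ (fun d => (shift2 ℓ)^[k] (U d)) := by
  induction k with
  | zero => exact h
  | succ k ih => simpa only [Function.iterate_succ_apply'] using ih.shift

theorem supportMap_mul (h : IsSolution D ℓ U) (k : ℕ) :
    supportMap D ℓ U k * (2 ^ ℓ - 1) = ∑ d ∈ D, d * (shift2 ℓ)^[k] (U d) :=
  Nat.div_mul_cancel (h.shift_iterate k).dvd

theorem supportMap_pos (h : IsSolution D ℓ U) (k : ℕ) : 0 < supportMap D ℓ U k :=
  Nat.pos_of_mul_pos_right (h.supportMap_mul k ▸ (h.shift_iterate k).pos)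

theorem two_mul_supportMap (h : IsSolution D ℓ U) (k : ℕ) :
    2 * supportMap D ℓ U k = supportMap D ℓ U (k + 1) + ∑ d ∈ wrapSet D ℓ U k, d := by
  have hk := h.shift_iterate k
  apply Nat.eq_of_mul_eq_mul_right h.two_pow_sub_one_pos
  rw [add_mul, mul_assoc, h.supportMap_mul, h.supportMap_mul,
    two_mul_sum_mul_eq hk.len_pos hk.lt_two_pow, wrapSet]
  simp only [Function.iterate_succ_apply']

theorem supportMap_add (h : IsSolution D ℓ U) {k a : ℕ}
    (hempty : ∀ j < a, wrapSet D ℓ U (k + j) = ∅) :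
    supportMap D ℓ U (k + a) = 2 ^ a * supportMap D ℓ U k :=
  eq_two_pow_mul_of_double fun j hj => by
    rw [h.two_mul_supportMap, hempty j hj, sum_empty, add_zero]

theorem periodic_supportMap (h : IsSolution D ℓ U) : Function.Periodic (supportMap D ℓ U) ℓ := by
  intro k
  simp only [supportMap, Function.iterate_add_apply, (isPeriodicPt_shift2 (h.lt_two_pow _)).eq]

theorem periodic_wrapSet (h : IsSolution D ℓ U) : Function.Periodic (wrapSet D ℓ U) ℓ := by
  intro k
  simp only [wrapSet, Function.iterate_add_apply, (isPeriodicPt_shift2 (h.lt_two_pow _)).eq]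

theorem mem_wrapSet (h : IsSolution D ℓ U) {d k : ℕ} (hk : k < ℓ) :
    d ∈ wrapSet D ℓ U k ↔ d ∈ D ∧ (U d).testBit (ℓ - 1 - k) = true := by
  rw [wrapSet, mem_filter, testBit_shift2_iterate (h.lt_two_pow d) hk]

theorem sum_wrapSet (h : IsSolution D ℓ U) (f : ℕ → ℕ) :
    ∑ k ∈ range ℓ, ∑ d ∈ wrapSet D ℓ U k, f d = ∑ d ∈ D, f d * s2 (U d) := by
  simp only [wrapSet, sum_filter]
  rw [sum_comm]
  refine sum_congr rfl fun d _ => ?_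
  rw [s2_eq_sum_testBit (h.lt_two_pow d), ← sum_range_reflect (fun i => ((U d).testBit i).toNat),
    mul_sum]
  refine sum_congr rfl fun k hk => ?_
  rw [testBit_shift2_iterate (h.lt_two_pow d) (mem_range.1 hk)]
  cases (U d).testBit (ℓ - 1 - k) <;> simp

theorem eq_of_wrapSet_eq (hU : IsSolution D ℓ U) (hV : IsSolution D ℓ V)
    (h : ∀ k < ℓ, wrapSet D ℓ U k = wrapSet D ℓ V k) : U = V := by
  funext d
  by_cases hd : d ∈ D
  · refine Nat.eq_of_testBit_eq fun i => ?_
    by_cases hi : i < ℓ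
    · have hmem : d ∈ wrapSet D ℓ U (ℓ - 1 - i) ↔ d ∈ wrapSet D ℓ V (ℓ - 1 - i) := by
        rw [h _ (by omega)]
      simpa only [hU.mem_wrapSet (by omega : ℓ - 1 - i < ℓ),
        hV.mem_wrapSet (by omega : ℓ - 1 - i < ℓ), hd, true_and, ← Bool.eq_iff_iff,
        Nat.sub_sub_self (Nat.le_sub_one_of_lt hi)] using hmem
    · have hpow : 2 ^ ℓ ≤ 2 ^ i := Nat.pow_le_pow_right two_pos (by omega)
      rw [Nat.testBit_lt_two_pow ((hU.lt_two_pow d).trans_le hpow),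
        Nat.testBit_lt_two_pow ((hV.lt_two_pow d).trans_le hpow)]
  · rw [hU.supp_sub d hd, hV.supp_sub d hd]

theorem s2_two_mul_supportMap_sub_one (h : IsSolution D ℓ U) (k : ℕ) :
    s2 (supportMap D ℓ U (k + 1) - 1 + ∑ d ∈ wrapSet D ℓ U k, d) =
      s2 (supportMap D ℓ U k - 1) + 1 := by
  have hstep := h.two_mul_supportMap k
  have hk := h.supportMap_pos k
  have hk' := h.supportMap_pos (k + 1)
  rw [← s2_two_mul_add _ one_lt_two]
  congr 1
  omega

theorem s2_supportMap_sub_one_add_one_le (h : IsSolution D ℓ U) (k : ℕ) :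
    s2 (supportMap D ℓ U k - 1) + 1 ≤
      s2 (supportMap D ℓ U (k + 1) - 1) + ∑ d ∈ wrapSet D ℓ U k, s2 d := by
  rw [← h.s2_two_mul_supportMap_sub_one]
  exact (s2_add_le _ _).trans (Nat.add_le_add_left (s2_sum_le _ _) _)

theorem sum_s2_supportMap_succ_sub_one (h : IsSolution D ℓ U) :
    ∑ k ∈ range ℓ, s2 (supportMap D ℓ U (k + 1) - 1) =
      ∑ k ∈ range ℓ, s2 (supportMap D ℓ U k - 1) :=
  sum_range_comp_succ_of_eq (f := fun k => s2 (supportMap D ℓ U k - 1))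
    (h.periodic_supportMap.comp fun v => s2 (v - 1)).eq

theorem length_le_sum_s2_mul_s2 (h : IsSolution D ℓ U) : ℓ ≤ ∑ d ∈ D, s2 d * s2 (U d) := by
  have hsum := sum_le_sum fun k (_ : k ∈ range ℓ) => h.s2_supportMap_sub_one_add_one_le k
  rw [sum_add_distrib, sum_add_distrib, h.sum_wrapSet s2,
    h.sum_s2_supportMap_succ_sub_one] at hsum
  simpa using hsum

theorem length_le_mul_weight (h : IsSolution D ℓ U) {n : ℕ} (hn : ∀ d ∈ D, s2 d ≤ n) :
    ℓ ≤ n * weight D U :=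
  h.length_le_sum_s2_mul_s2.trans (sum_s2_mul_s2_le_mul_weight hn)

theorem sum_s2_mul_s2_eq_of_mul_weight_eq (h : IsSolution D ℓ U) {n : ℕ}
    (hn : ∀ d ∈ D, s2 d ≤ n) (hmin : n * weight D U = ℓ) : ∑ d ∈ D, s2 d * s2 (U d) = ℓ :=
  ((sum_s2_mul_s2_le_mul_weight hn).trans_eq hmin).antisymm h.length_le_sum_s2_mul_s2

theorem s2_eq_of_mem_wrapSet (h : IsSolution D ℓ U) {n : ℕ} (hn : ∀ d ∈ D, s2 d ≤ n)
    (hmin : n * weight D U = ℓ) {d k : ℕ} (hd : d ∈ wrapSet D ℓ U k) : s2 d = n := by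
  have hsum : ∑ d ∈ D, s2 d * s2 (U d) = ∑ d ∈ D, n * s2 (U d) := by
    rw [h.sum_s2_mul_s2_eq_of_mul_weight_eq hn hmin, ← mul_sum, ← weight, hmin]
  exact Nat.eq_of_mul_eq_mul_right
    (Nat.pos_of_ne_zero fun h0 => ne_zero_of_mem_wrapSet hd (eq_zero_of_s2_eq_zero h0))
    ((sum_eq_sum_iff_of_le fun d hd => Nat.mul_le_mul_right _ (hn d hd)).1 hsum d
      (mem_filter.1 hd).1)

theorem s2_supportMap_sub_one_add_one_eq (h : IsSolution D ℓ U)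
    (hmin : ∑ d ∈ D, s2 d * s2 (U d) = ℓ) (k : ℕ) :
    s2 (supportMap D ℓ U k - 1) + 1 =
      s2 (supportMap D ℓ U (k + 1) - 1) + ∑ d ∈ wrapSet D ℓ U k, s2 d := by
  have hsum : ∑ k ∈ range ℓ, (s2 (supportMap D ℓ U k - 1) + 1) =
      ∑ k ∈ range ℓ, (s2 (supportMap D ℓ U (k + 1) - 1) + ∑ d ∈ wrapSet D ℓ U k, s2 d) := by
    rw [sum_add_distrib, sum_add_distrib, h.sum_wrapSet s2,
      h.sum_s2_supportMap_succ_sub_one, hmin]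
    simp
  have hmod := (sum_eq_sum_iff_of_le fun k _ => h.s2_supportMap_sub_one_add_one_le k).1 hsum
    (k % ℓ) (mem_range.2 (Nat.mod_lt k h.len_pos))
  have hnext : supportMap D ℓ U (k % ℓ + 1) = supportMap D ℓ U (k + 1) := by
    rw [← h.periodic_supportMap.map_mod_nat, Nat.mod_add_mod, h.periodic_supportMap.map_mod_nat]
  rwa [hnext, h.periodic_supportMap.map_mod_nat, h.periodic_wrapSet.map_mod_nat] at hmod

end IsSolution

end Solutions

/-! ### Steps of a minimal solution -/

theorem mem_oddD {n d : ℕ} : d ∈ oddD n ↔ Odd d ∧ d + 3 ≤ 2 ^ (n + 1) := by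
  rw [oddD, oddUpTo, mem_filter, mem_range, Nat.odd_iff, and_comm]
  omega

/-- For `i < n`, the odd number with `n + 1` binary digits whose only digit `0` is in position
`i + 1`; these are the elements of `oddD n` of the largest binary weight, `n`. -/
def oneGap (n i : ℕ) : ℕ := 2 ^ (n + 1) - (2 ^ (i + 1) + 1)

theorem oneGap_add {n i : ℕ} (hi : i < n) : oneGap n i + (2 ^ (i + 1) + 1) = 2 ^ (n + 1) :=
  Nat.sub_add_cancel (Nat.pow_lt_pow_right one_lt_two (by omega))

theorem oneGap_zero (n : ℕ) : oneGap n 0 = 2 ^ (n + 1) - 3 := rfl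

theorem oneGap_sub_one {n : ℕ} (hn : 1 ≤ n) : oneGap n (n - 1) = 2 ^ n - 1 := by
  rw [oneGap, Nat.sub_add_cancel hn, pow_succ]
  omega

theorem oneGap_sub_two {n : ℕ} (hn : 2 ≤ n) : oneGap n (n - 2) = 3 * 2 ^ (n - 1) - 1 := by
  obtain ⟨m, rfl⟩ := Nat.exists_eq_add_of_le' hn
  simp only [oneGap, Nat.add_sub_cancel, show m + 2 - 1 = m + 1 by omega, pow_succ]
  omega

theorem oneGap_mem_oddD {n i : ℕ} (hi : i < n) : oneGap n i ∈ oddD n := by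
  have hgap := oneGap_add hi
  have : 0 < 2 ^ i := by positivity
  exact mem_oddD.2 ⟨Nat.odd_iff.2 (by omega), by omega⟩

theorem oneGap_ne {n i j : ℕ} (hi : i < n) (hj : j < n) (hij : i ≠ j) :
    oneGap n i ≠ oneGap n j := by
  intro h
  have hi' := oneGap_add hi
  have hj' := oneGap_add hj
  have := Nat.pow_right_injective le_rfl (show 2 ^ (i + 1) = 2 ^ (j + 1) by omega)
  omega

theorem s2_two_pow_sub_succ_pos_of_mem_oddD {n d : ℕ} (hd : d ∈ oddD n) :
    0 < s2 (2 ^ (n + 1) - (d + 1)) := by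
  have hlt := (mem_oddD.1 hd).2
  exact Nat.pos_of_ne_zero fun h0 => by have := eq_zero_of_s2_eq_zero h0; omega

theorem s2_le_of_mem_oddD {n d : ℕ} (hd : d ∈ oddD n) : s2 d ≤ n := by
  have hcompl := s2_two_pow_sub_succ_add_s2 (m := n + 1) (x := d) (by have := mem_oddD.1 hd; omega)
  have hpos := s2_two_pow_sub_succ_pos_of_mem_oddD hd
  omega

theorem exists_eq_oneGap_of_s2_eq {n d : ℕ} (hd : d ∈ oddD n) (hs : s2 d = n) :
    ∃ i < n, d = oneGap n i := by
  have hlt := (mem_oddD.1 hd).2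
  have hcompl := s2_two_pow_sub_succ_add_s2 (m := n + 1) (x := d) (by omega)
  obtain ⟨j, hj⟩ := exists_eq_two_pow_of_s2_eq_one (m := 2 ^ (n + 1) - (d + 1)) (by omega)
  have hjn : j < n + 1 := (Nat.pow_lt_pow_iff_right one_lt_two).1 (by omega : 2 ^ j < 2 ^ (n + 1))
  obtain _ | i := j
  · omega
  · exact ⟨i, by omega, by rw [oneGap]; omega⟩

theorem eq_zero_or_eq_two_pow_of_s2_add_oneGap {n i x : ℕ} (hi : i < n) (hx : x < 2 ^ (n + 1))
    (h : s2 (x + oneGap n i) = s2 x + s2 (oneGap n i)) : x = 0 ∨ x = 2 ^ (i + 1) := by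
  have hgap : 2 ^ (i + 1) < 2 ^ (n + 1) := Nat.pow_lt_pow_right one_lt_two (by omega)
  have hbit : ∀ j, j ≠ i + 1 → x.testBit j = false := by
    intro j hj
    by_cases hjn : j < n + 1
    · refine testBit_eq_false_of_s2_add_eq h ?_
      rw [oneGap, Nat.testBit_two_pow_sub_succ hgap, Nat.testBit_two_pow]
      simp [hjn, hj.symm]
    · exact Nat.testBit_lt_two_pow (hx.trans_le (Nat.pow_le_pow_right two_pos (by omega)))
  cases hxi : x.testBit (i + 1)
  · refine .inl (Nat.eq_of_testBit_eq fun j => ?_)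
    by_cases hj : j = i + 1
    · rw [hj, hxi, Nat.zero_testBit]
    · rw [hbit j hj, Nat.zero_testBit]
  · refine .inr (Nat.eq_of_testBit_eq fun j => ?_)
    by_cases hj : j = i + 1
    · rw [hj, hxi, Nat.testBit_two_pow_self]
    · rw [hbit j hj, Nat.testBit_two_pow_of_ne (Ne.symm hj)]

/-- `MinimalStep n v E w`: the possible values `v`, `w` of the support map at `k`, `k + 1` and the
possible wrap set `E` at `k`, for a solution of density `1 / n` over `oddD n`. -/
inductive MinimalStep (n v : ℕ) (E : Finset ℕ) (w : ℕ) : Prop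
  | double (hv : v < 2 ^ n) (hE : E = ∅) (hw : w = 2 * v)
  | close (i : ℕ) (hi : i < n) (hv : v + 2 ^ i = 2 ^ n) (hE : E = {oneGap n i}) (hw : w = 1)
  | overlap (i : ℕ) (hi : i < n) (hv : v = 2 ^ n) (hE : E = {oneGap n i}) (hw : w = 2 ^ (i + 1) + 1)

namespace IsSolution

variable {ℓ n : ℕ} {U : ℕ → ℕ}

theorem supportMap_le {D : Finset ℕ} {T : ℕ} (h : IsSolution D ℓ U)
    (hT : ∀ k, ∑ d ∈ wrapSet D ℓ U k, d ≤ T) (k : ℕ) : supportMap D ℓ U k ≤ T := by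
  obtain ⟨m, -, hm⟩ := exists_max_image (range ℓ) (supportMap D ℓ U) ⟨0, mem_range.2 h.len_pos⟩
  have hmax : ∀ j, supportMap D ℓ U j ≤ supportMap D ℓ U m := fun j => by
    rw [← h.periodic_supportMap.map_mod_nat j]
    exact hm _ (mem_range.2 (Nat.mod_lt j h.len_pos))
  have := h.two_mul_supportMap m
  have := hmax (m + 1)
  have := hmax k
  have := hT m
  omega

theorem s2_add_sum_wrapSet_eq {D : Finset ℕ} (h : IsSolution D ℓ U)
    (hmin : ∑ d ∈ D, s2 d * s2 (U d) = ℓ) (k : ℕ) :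
    s2 (supportMap D ℓ U (k + 1) - 1 + ∑ d ∈ wrapSet D ℓ U k, d) =
      s2 (supportMap D ℓ U (k + 1) - 1) + ∑ d ∈ wrapSet D ℓ U k, s2 d :=
  (h.s2_two_mul_supportMap_sub_one k).trans (h.s2_supportMap_sub_one_add_one_eq hmin k)

theorem wrapSet_eq_empty_or_singleton (h : IsSolution (oddD n) ℓ U)
    (hmin : n * weight (oddD n) U = ℓ) (k : ℕ) :
    wrapSet (oddD n) ℓ U k = ∅ ∨ ∃ i < n, wrapSet (oddD n) ℓ U k = {oneGap n i} := by
  have hs2 : ∀ d ∈ oddD n, s2 d ≤ n := fun _ => s2_le_of_mem_oddD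
  have hD : wrapSet (oddD n) ℓ U k ⊆ oddD n := filter_subset _ _
  have hcard := card_le_one_of_s2_add_sum_eq (fun d hd => (mem_oddD.1 (hD hd)).1)
    (h.s2_add_sum_wrapSet_eq (h.sum_s2_mul_s2_eq_of_mul_weight_eq hs2 hmin) k)
  obtain hE | ⟨d, hE⟩ :=
    (Nat.le_one_iff_eq_zero_or_eq_one.1 hcard).imp card_eq_zero.1 card_eq_one.1
  · exact .inl hE
  · have hd : d ∈ wrapSet (oddD n) ℓ U k := hE ▸ mem_singleton_self d
    obtain ⟨i, hi, rfl⟩ := exists_eq_oneGap_of_s2_eq (hD hd) (h.s2_eq_of_mem_wrapSet hs2 hmin hd)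
    exact .inr ⟨i, hi, hE⟩

theorem supportMap_le_of_mul_weight_eq (h : IsSolution (oddD n) ℓ U)
    (hmin : n * weight (oddD n) U = ℓ) (k : ℕ) :
    supportMap (oddD n) ℓ U k ≤ 2 ^ (n + 1) - 3 := by
  refine h.supportMap_le (fun k => ?_) k
  obtain hE | ⟨i, -, hE⟩ := h.wrapSet_eq_empty_or_singleton hmin k
  · simp [hE]
  · have hi1 : 2 ^ 1 ≤ 2 ^ (i + 1) := Nat.pow_le_pow_right two_pos (by omega)
    rw [hE, sum_singleton, oneGap]
    omega

theorem minimalStep (h : IsSolution (oddD n) ℓ U) (hmin : n * weight (oddD n) U = ℓ) (k : ℕ) :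
    MinimalStep n (supportMap (oddD n) ℓ U k) (wrapSet (oddD n) ℓ U k)
      (supportMap (oddD n) ℓ U (k + 1)) := by
  have hrec := h.two_mul_supportMap k
  have hle := h.supportMap_le_of_mul_weight_eq hmin (k + 1)
  have hpos := h.supportMap_pos k
  have hpos' := h.supportMap_pos (k + 1)
  have hfree := h.s2_add_sum_wrapSet_eq
    (h.sum_s2_mul_s2_eq_of_mul_weight_eq (fun _ => s2_le_of_mem_oddD) hmin) k
  generalize supportMap (oddD n) ℓ U k = v, supportMap (oddD n) ℓ U (k + 1) = w at *
  obtain hE | ⟨i, hi, hE⟩ := h.wrapSet_eq_empty_or_singleton hmin k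
  · rw [hE, sum_empty, add_zero] at hrec
    exact .double (by omega) hE hrec.symm
  · simp only [hE, sum_singleton] at hrec hfree
    have hgap := oneGap_add hi
    obtain hw | hw := eq_zero_or_eq_two_pow_of_s2_add_oneGap hi (by omega) hfree
    · exact .close i hi (by omega) hE (by omega)
    · exact .overlap i hi (by omega) hE (by omega)

end IsSolution

/-! ### Following the support map -/

theorem eq_one_and_eq_of_two_pow_mul_odd_eq {x z w : ℕ} (hw : Odd w) (h : 2 ^ x * w = 2 ^ z) :
    w = 1 ∧ x = z := by
  have hcop : Nat.Coprime w (2 ^ z) := (Nat.coprime_two_right.2 hw).pow_right z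
  have h1 : w = 1 := hcop.eq_one_of_dvd (h ▸ dvd_mul_left w (2 ^ x))
  subst h1
  exact ⟨rfl, Nat.pow_right_injective le_rfl (by simpa using h)⟩

theorem eq_of_two_pow_mul_add_two_pow_eq {a b n w : ℕ} (hw : Odd w)
    (h : 2 ^ a * w + 2 ^ b = 2 ^ n) : a = b := by
  rcases lt_trichotomy a b with hlt | heq | hlt
  · obtain ⟨c, rfl⟩ := Nat.exists_eq_add_of_lt hlt
    have hodd : Odd (w + 2 ^ (c + 1)) := hw.add_even (even_two.pow_of_ne_zero c.succ_ne_zero)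
    have := (eq_one_and_eq_of_two_pow_mul_odd_eq (x := a) (z := n) hodd (by rw [← h]; ring)).1
    have : 0 < 2 ^ (c + 1) := by positivity
    have := hw.pos
    omega
  · exact heq
  · obtain ⟨c, rfl⟩ := Nat.exists_eq_add_of_lt hlt
    have hodd : Odd (2 ^ (c + 1) * w + 1) :=
      ((even_two.pow_of_ne_zero c.succ_ne_zero).mul_right w).add_one
    have := (eq_one_and_eq_of_two_pow_mul_odd_eq (x := b) (z := n) hodd (by rw [← h]; ring)).1
    have : 0 < 2 ^ (c + 1) * w := Nat.mul_pos (by positivity) hw.pos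
    omega

theorem eq_of_two_pow_add_two_pow_eq {a b n : ℕ} (h : 2 ^ a + 2 ^ b = 2 ^ n) :
    a + 1 = n ∧ b + 1 = n := by
  obtain rfl := eq_of_two_pow_mul_add_two_pow_eq odd_one (by rwa [mul_one])
  rw [← mul_two, ← pow_succ] at h
  exact ⟨Nat.pow_right_injective le_rfl h, Nat.pow_right_injective le_rfl h⟩

theorem eq_of_two_pow_mul_two_pow_succ_add_one_add_two_pow_eq {a b i n : ℕ}
    (h : 2 ^ a * (2 ^ (i + 1) + 1) + 2 ^ b = 2 ^ n) : a + 2 = n ∧ b + 2 = n ∧ i = 0 := by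
  have hodd : Odd (2 ^ (i + 1) + 1) := (even_two.pow_of_ne_zero i.succ_ne_zero).add_one
  obtain rfl := eq_of_two_pow_mul_add_two_pow_eq hodd h
  obtain ⟨h1, h2⟩ := eq_of_two_pow_add_two_pow_eq (a := a + 1 + i) (b := a + 1) (by rw [← h]; ring)
  omega

theorem MinimalStep.le {n v w : ℕ} {E : Finset ℕ} (h : MinimalStep n v E w) : v ≤ 2 ^ n := by
  rcases h with hv | ⟨_, -, hv⟩ | ⟨_, -, hv⟩
  exacts [hv.le, hv ▸ Nat.le_add_right _ _, hv.le]

theorem MinimalStep.eq_double {n v w : ℕ} {E : Finset ℕ} (h : MinimalStep n v E w)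
    (hv : v ≠ 2 ^ n) (hclose : ∀ i < n, v + 2 ^ i ≠ 2 ^ n) : E = ∅ ∧ w = 2 * v := by
  rcases h with ⟨-, hE, hw⟩ | ⟨i, hi, hv', -, -⟩ | ⟨_, -, hv', -, -⟩
  exacts [⟨hE, hw⟩, absurd hv' (hclose i hi), absurd hv' hv]

section Walk

variable {n : ℕ} {v : ℕ → ℕ} {E : ℕ → Finset ℕ}

theorem eq_two_pow_mul_of_minimalStep (hstep : ∀ k, MinimalStep n (v k) (E k) (v (k + 1)))
    {k a : ℕ} (hv : ∀ j < a, 2 ^ j * v k ≠ 2 ^ n)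
    (hclose : ∀ j < a, ∀ i < n, 2 ^ j * v k + 2 ^ i ≠ 2 ^ n) :
    v (k + a) = 2 ^ a * v k ∧ ∀ j < a, E (k + j) = ∅ := by
  induction a with
  | zero => simp
  | succ a ih =>
    obtain ⟨hva, hEa⟩ := ih (fun j hj => hv j (by omega)) (fun j hj => hclose j (by omega))
    obtain ⟨hE, hw⟩ := (hstep (k + a)).eq_double (hva ▸ hv a (by omega)) (hva ▸ hclose a (by omega))
    refine ⟨by rw [← add_assoc, hw, hva, pow_succ']; ring, fun j hj => ?_⟩
    obtain rfl | hj := (Nat.lt_succ_iff.1 hj).eq_or_lt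
    exacts [hE, hEa j hj]

theorem walk_of_eq_two_pow_succ_add_one (hn : 2 ≤ n)
    (hstep : ∀ k, MinimalStep n (v k) (E k) (v (k + 1))) {k i : ℕ} (hk : v k = 2 ^ (i + 1) + 1) :
    i = 0 ∧ v (k + (n - 1)) = 1 ∧ E (k + (n - 2)) = {oneGap n (n - 2)} ∧
      ∀ j < n - 2, E (k + j) = ∅ := by
  have hi : 2 ≤ 2 ^ (i + 1) := Nat.pow_le_pow_right two_pos (by omega : 1 ≤ i + 1)
  have hodd : Odd (v k) := hk ▸ (even_two.pow_of_ne_zero i.succ_ne_zero).add_one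
  have hne : ∀ j, 2 ^ j * v k ≠ 2 ^ n := fun j h => by
    have := (eq_one_and_eq_of_two_pow_mul_odd_eq hodd h).1
    omega
  obtain ⟨hlast, hempty⟩ := eq_two_pow_mul_of_minimalStep hstep (k := k) (a := n - 2)
    (fun j _ => hne j) fun j hj b _ h => by
      have := eq_of_two_pow_mul_two_pow_succ_add_one_add_two_pow_eq (hk ▸ h)
      omega
  rw [show k + (n - 1) = k + (n - 2) + 1 by omega]
  rcases hstep (k + (n - 2)) with ⟨-, -, hw⟩ | ⟨b, -, hv, hE, hw⟩ | ⟨_, -, hv, -, -⟩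
  · have h4 : 2 ^ n = 4 * 2 ^ (n - 2) := by rw [← Nat.sub_add_cancel hn, pow_add]; norm_num; ring
    have hmul : 2 ^ (n - 2) * 3 ≤ 2 ^ (n - 2) * v k := Nat.mul_le_mul_left _ (by omega)
    have : 0 < 2 ^ (n - 2) := by positivity
    have hle := (hstep (k + (n - 2) + 1)).le
    omega
  · rw [hlast, hk] at hv
    obtain ⟨-, hb, hi0⟩ := eq_of_two_pow_mul_two_pow_succ_add_one_add_two_pow_eq hv
    exact ⟨hi0, hw, by rw [hE, ← hb, Nat.add_sub_cancel], hempty⟩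
  · exact absurd (hlast ▸ hv) (hne _)

theorem walk_of_eq_two_pow (hn : 2 ≤ n) (hstep : ∀ k, MinimalStep n (v k) (E k) (v (k + 1)))
    {k : ℕ} (hk : v k = 2 ^ n) :
    v (k + n) = 1 ∧ ∀ j < n, E (k + j) =
      if j = 0 then {oneGap n 0} else if j + 1 = n then {oneGap n (n - 2)} else ∅ := by
  rcases hstep k with ⟨hlt, -, -⟩ | ⟨i, -, hlt, -, -⟩ | ⟨i, -, -, hEk, hk1⟩
  · omega
  · have : 0 < 2 ^ i := by positivity
    omega
  · obtain ⟨rfl, hone, hlast, hempty⟩ := walk_of_eq_two_pow_succ_add_one hn hstep hk1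
    refine ⟨by rwa [show k + n = k + 1 + (n - 1) by omega], fun j hj => ?_⟩
    split_ifs with h0 h1
    · rw [h0, add_zero, hEk]
    · rw [show k + j = k + 1 + (n - 2) by omega, hlast]
    · rw [show k + j = k + 1 + (j - 1) by omega, hempty _ (by omega)]

theorem walk_of_eq_one (hn : 1 ≤ n) (hstep : ∀ k, MinimalStep n (v k) (E k) (v (k + 1)))
    {k : ℕ} (hk : v k = 1) :
    (v (k + n) = 1 ∧ ∀ j < n, E (k + j) = if j + 1 = n then {oneGap n (n - 1)} else ∅) ∨
      (v (k + n) = 2 ^ n ∧ ∀ j < n, E (k + j) = ∅) := by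
  obtain ⟨hlast, hempty⟩ := eq_two_pow_mul_of_minimalStep hstep (k := k) (a := n - 1)
    (fun j hj h => by
      rw [hk, mul_one] at h
      exact hj.ne (by have := Nat.pow_right_injective le_rfl h; omega))
    fun j hj b _ h => by
      have := eq_of_two_pow_add_two_pow_eq (by rwa [hk, mul_one] at h)
      omega
  have hpow : 2 ^ n = 2 * 2 ^ (n - 1) := by rw [← pow_succ', Nat.sub_add_cancel hn]
  have hcases : ∀ j < n, j = n - 1 ∨ j < n - 1 := by omega
  rw [hk, mul_one] at hlast
  rw [show k + n = k + (n - 1) + 1 by omega]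
  rcases hstep (k + (n - 1)) with ⟨-, hE, hw⟩ | ⟨b, -, hv, hE, hw⟩ | ⟨_, -, hv, -, -⟩
  · refine .inr ⟨by rw [hw, hlast, hpow], fun j hj => ?_⟩
    obtain rfl | hj := hcases j hj
    exacts [hE, hempty j hj]
  · rw [hlast] at hv
    obtain ⟨-, hb⟩ := eq_of_two_pow_add_two_pow_eq hv
    refine .inl ⟨hw, fun j hj => ?_⟩
    split_ifs with h
    · rw [show j = n - 1 by omega, hE, ← hb, Nat.add_sub_cancel]
    · exact hempty j (by omega)
  · have : 0 < 2 ^ (n - 1) := by positivity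
    omega

theorem return_of_eq_one (hn : 2 ≤ n) (hstep : ∀ k, MinimalStep n (v k) (E k) (v (k + 1)))
    {k : ℕ} (hk : v k = 1) :
    (v (k + n) = 1 ∧ ∀ j < n, E (k + j) = if j + 1 = n then {oneGap n (n - 1)} else ∅) ∨
      (v (k + n) ≠ 1 ∧ v (k + 2 * n) = 1 ∧ ∀ j < 2 * n, E (k + j) =
        if j = n then {oneGap n 0} else if j + 1 = 2 * n then {oneGap n (n - 2)} else ∅) := by
  refine (walk_of_eq_one (by omega) hstep hk).imp_right fun ⟨htop, hE⟩ => ?_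
  obtain ⟨hback, hE'⟩ := walk_of_eq_two_pow hn hstep htop
  refine ⟨htop ▸ (Nat.one_lt_two_pow (by omega)).ne', by rwa [two_mul, ← add_assoc],
    fun j hj => ?_⟩
  by_cases hjn : j < n
  · rw [hE j hjn, if_neg (by omega), if_neg (by omega)]
  · rw [show k + j = k + n + (j - n) by omega, hE' (j - n) (by omega)]
    simp only [show j - n = 0 ↔ j = n by omega, show j - n + 1 = n ↔ j + 1 = 2 * n by omega]

theorem exists_eq_one_of_minimalStep (hn : 2 ≤ n)
    (hstep : ∀ k, MinimalStep n (v k) (E k) (v (k + 1))) (hpos : 0 < v 0) : ∃ k, v k = 1 := by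
  obtain ⟨k, hk⟩ : ∃ k, v (k + 1) ≠ 2 * v k := by
    by_contra! hdouble
    have hle := (hstep (n + 1)).le
    have hgrow := eq_two_pow_mul_of_double (k := 0) (a := n + 1) fun j _ => hdouble (0 + j)
    have hmul : 2 ^ (n + 1) * 1 ≤ 2 ^ (n + 1) * v 0 := Nat.mul_le_mul_left _ hpos
    have hpow : 2 ^ n < 2 ^ (n + 1) := Nat.pow_lt_pow_right one_lt_two n.lt_succ_self
    rw [zero_add] at hgrow
    omega
  rcases hstep k with ⟨-, -, hw⟩ | ⟨_, -, -, -, hw⟩ | ⟨_, -, hv, -, -⟩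
  exacts [absurd hw hk, ⟨k + 1, hw⟩, ⟨k + n, (walk_of_eq_two_pow hn hstep hv).1⟩]

end Walk

/-! ### The two minimal solutions -/

section ExplicitSolutions

variable {D : Finset ℕ} {ℓ a b x y : ℕ}

theorem sum_sol1 (ha : a ∈ D) {f : ℕ → ℕ → ℕ} (hf : ∀ d, f d 0 = 0) :
    ∑ d ∈ D, f d (sol1 a d) = f a 1 := by
  rw [sum_eq_single_of_mem a ha fun d _ hd => by rw [sol1, if_neg hd, hf], sol1, if_pos rfl]

theorem sum_sol2 (ha : a ∈ D) (hb : b ∈ D) (hab : a ≠ b) {f : ℕ → ℕ → ℕ} (hf : ∀ d, f d 0 = 0) :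
    ∑ d ∈ D, f d (sol2 a x b y d) = f a x + f b y := by
  rw [sum_eq_add_of_mem a b ha hb hab fun d _ hd => by
    rw [sol2, if_neg hd.1, if_neg hd.2, hf], sol2, sol2, if_pos rfl, if_neg hab.symm, if_pos rfl]

theorem isSolution_sol1 (hℓ : 1 ≤ ℓ) (ha : a ∈ D) (hpos : 0 < a) (hdvd : 2 ^ ℓ - 1 ∣ a) :
    IsSolution D ℓ (sol1 a) := by
  have hsum := sum_sol1 ha (f := (· * ·)) mul_zero
  have hpow : 2 ^ 1 ≤ 2 ^ ℓ := Nat.pow_le_pow_right two_pos hℓ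
  refine ⟨hℓ, fun d => ?_, fun d hd => if_neg (ne_of_mem_of_not_mem ha hd).symm, ?_, ?_⟩
  · rw [sol1]
    split_ifs <;> omega
  · rwa [hsum, mul_one]
  · rwa [hsum, mul_one]

theorem isSolution_sol2 (hℓ : 1 ≤ ℓ) (ha : a ∈ D) (hb : b ∈ D) (hab : a ≠ b)
    (hx : x < 2 ^ ℓ) (hy : y < 2 ^ ℓ) (hpos : 0 < a * x + b * y)
    (hdvd : 2 ^ ℓ - 1 ∣ a * x + b * y) : IsSolution D ℓ (sol2 a x b y) := by
  have hsum := sum_sol2 (x := x) (y := y) ha hb hab (f := (· * ·)) mul_zero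
  refine ⟨hℓ, fun d => ?_, fun d hd => ?_, ?_, ?_⟩
  · rw [sol2]
    split_ifs <;> omega
  · rw [sol2, if_neg (ne_of_mem_of_not_mem ha hd).symm,
      if_neg (ne_of_mem_of_not_mem hb hd).symm]
  · rwa [hsum]
  · rwa [hsum]

theorem weight_sol1 (ha : a ∈ D) : weight D (sol1 a) = s2 1 :=
  sum_sol1 ha (f := fun _ => s2) fun _ => s2_zero

theorem weight_sol2 (ha : a ∈ D) (hb : b ∈ D) (hab : a ≠ b) :
    weight D (sol2 a x b y) = s2 x + s2 y :=
  sum_sol2 ha hb hab (f := fun _ => s2) fun _ => s2_zero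

theorem supportMap_sol1_zero (ha : a ∈ D) : supportMap D ℓ (sol1 a) 0 = a / (2 ^ ℓ - 1) := by
  have hsum := sum_sol1 ha (f := (· * ·)) mul_zero
  rw [mul_one] at hsum
  exact congrArg (· / (2 ^ ℓ - 1)) hsum

theorem supportMap_sol2_zero (ha : a ∈ D) (hb : b ∈ D) (hab : a ≠ b) :
    supportMap D ℓ (sol2 a x b y) 0 = (a * x + b * y) / (2 ^ ℓ - 1) :=
  congrArg (· / (2 ^ ℓ - 1)) (sum_sol2 ha hb hab (f := (· * ·)) mul_zero)

theorem testBit_two_pow_sub_one_sub {m k : ℕ} (hk : k < ℓ) :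
    (2 ^ m).testBit (ℓ - 1 - k) = decide (k + m + 1 = ℓ) := by
  rw [Nat.testBit_two_pow]
  exact decide_eq_decide.2 (by omega)

theorem wrapSet_sol1 (h : IsSolution D ℓ (sol1 a)) (ha : a ∈ D) {k : ℕ} (hk : k < ℓ) :
    wrapSet D ℓ (sol1 a) k = if k + 1 = ℓ then {a} else ∅ := by
  have hbit := testBit_two_pow_sub_one_sub (m := 0) hk
  rw [pow_zero, add_zero] at hbit
  ext d
  rw [h.mem_wrapSet hk, sol1]
  by_cases hd : d = a
  · rw [if_pos hd, hbit, hd]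
    split_ifs with hlast <;> simp [ha, hlast]
  · rw [if_neg hd]
    split_ifs <;> simp [hd]

theorem wrapSet_sol2 {m : ℕ} (h : IsSolution D ℓ (sol2 a (2 ^ m) b 1)) (ha : a ∈ D) (hb : b ∈ D)
    (hab : a ≠ b) (hm : m ≠ 0) {k : ℕ} (hk : k < ℓ) :
    wrapSet D ℓ (sol2 a (2 ^ m) b 1) k =
      if k + m + 1 = ℓ then {a} else if k + 1 = ℓ then {b} else ∅ := by
  have hbit_a := testBit_two_pow_sub_one_sub (m := m) hk
  have hbit_b := testBit_two_pow_sub_one_sub (m := 0) hk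
  rw [pow_zero, add_zero] at hbit_b
  have hne : k + m + 1 = ℓ → k + 1 ≠ ℓ := by omega
  ext d
  rw [h.mem_wrapSet hk, sol2]
  by_cases hda : d = a
  · rw [if_pos hda, hbit_a, hda]
    split_ifs with h1 h2 <;> simp [ha, hab, h1]
  · rw [if_neg hda]
    by_cases hdb : d = b
    · rw [if_pos hdb, hbit_b, hdb]
      split_ifs with h1 h2 <;> simp [hab.symm, *]
    · rw [if_neg hdb]
      split_ifs <;> simp [hda, hdb]

end ExplicitSolutions

theorem oneGap_mul_two_pow_add {n : ℕ} (hn : 2 ≤ n) :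
    oneGap n 0 * 2 ^ (n - 1) + oneGap n (n - 2) * 1 = 2 ^ (2 * n) - 1 := by
  obtain ⟨m, rfl⟩ := Nat.exists_eq_add_of_le' hn
  have h0 : oneGap (m + 2) 0 + 3 = 8 * 2 ^ m := (oneGap_add (by omega)).trans (by ring)
  have h2 : oneGap (m + 2) m + (2 * 2 ^ m + 1) = 8 * 2 ^ m := by
    rw [← pow_succ', oneGap_add (by omega)]
    ring
  have hmul : (oneGap (m + 2) 0 + 3) * (2 * 2 ^ m) = 2 ^ (2 * (m + 2)) := by rw [h0]; ring
  rw [add_mul] at hmul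
  rw [Nat.add_sub_cancel, show m + 2 - 1 = m + 1 by omega, pow_succ']
  omega

section MinimalSolutions

variable {n : ℕ}

theorem isSolution_sol1_oneGap (hn : 1 ≤ n) : IsSolution (oddD n) n (sol1 (oneGap n (n - 1))) := by
  have hpow : 2 ^ 1 ≤ 2 ^ n := Nat.pow_le_pow_right two_pos hn
  have hgap := oneGap_sub_one hn
  exact isSolution_sol1 hn (oneGap_mem_oddD (by omega)) (by omega) (dvd_of_eq hgap.symm)

theorem supportMap_sol1_oneGap {k : ℕ} (hk : k < n) :
    supportMap (oddD n) n (sol1 (oneGap n (n - 1))) k = 2 ^ k := by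
  have hn : 1 ≤ n := by omega
  have ha : oneGap n (n - 1) ∈ oddD n := oneGap_mem_oddD (by omega)
  have h := isSolution_sol1_oneGap hn
  have hadd := h.supportMap_add (k := 0) (a := k) fun j hj => by
    rw [wrapSet_sol1 h ha (by omega), if_neg (by omega)]
  rwa [zero_add, supportMap_sol1_zero ha, oneGap_sub_one hn, Nat.div_self h.two_pow_sub_one_pos,
    mul_one, ← oneGap_sub_one hn] at hadd

theorem irreducibleSol_sol1_oneGap : IrreducibleSol (oddD n) n (sol1 (oneGap n (n - 1))) := by
  intro i hi j hj h
  rw [coe_range, Set.mem_Iio] at hi hj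
  rw [supportMap_sol1_oneGap hi, supportMap_sol1_oneGap hj] at h
  exact Nat.pow_right_injective le_rfl h

theorem isSolution_sol2_oneGap (hn : 3 ≤ n) :
    IsSolution (oddD n) (2 * n) (sol2 (oneGap n 0) (2 ^ (n - 1)) (oneGap n (n - 2)) 1) := by
  have hsum := oneGap_mul_two_pow_add (n := n) (by omega)
  have hpow : 2 ^ 1 ≤ 2 ^ (2 * n) := Nat.pow_le_pow_right two_pos (by omega)
  exact isSolution_sol2 (by omega) (oneGap_mem_oddD (by omega)) (oneGap_mem_oddD (by omega))
    (oneGap_ne (by omega) (by omega) (by omega)) (Nat.pow_lt_pow_right one_lt_two (by omega))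
    hpow (by omega) (dvd_of_eq hsum.symm)

theorem wrapSet_sol2_oneGap (hn : 3 ≤ n) {k : ℕ} (hk : k < 2 * n) :
    wrapSet (oddD n) (2 * n) (sol2 (oneGap n 0) (2 ^ (n - 1)) (oneGap n (n - 2)) 1) k =
      if k = n then {oneGap n 0} else if k + 1 = 2 * n then {oneGap n (n - 2)} else ∅ := by
  rw [wrapSet_sol2 (isSolution_sol2_oneGap hn) (oneGap_mem_oddD (by omega))
    (oneGap_mem_oddD (by omega)) (oneGap_ne (by omega) (by omega) (by omega)) (by omega) hk]
  simp only [show k + (n - 1) + 1 = 2 * n ↔ k = n by omega]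

theorem supportMap_sol2_oneGap (hn : 3 ≤ n) {k : ℕ} (hk : k < 2 * n) :
    supportMap (oddD n) (2 * n) (sol2 (oneGap n 0) (2 ^ (n - 1)) (oneGap n (n - 2)) 1) k =
      if k ≤ n then 2 ^ k else 3 * 2 ^ (k - (n + 1)) := by
  have h := isSolution_sol2_oneGap hn
  have hzero := supportMap_sol2_zero (ℓ := 2 * n) (x := 2 ^ (n - 1)) (y := 1)
    (oneGap_mem_oddD (by omega : 0 < n)) (oneGap_mem_oddD (by omega : n - 2 < n))
    (oneGap_ne (by omega) (by omega) (by omega))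
  rw [oneGap_mul_two_pow_add (by omega), Nat.div_self h.two_pow_sub_one_pos] at hzero
  have hfirst : ∀ k ≤ n, supportMap (oddD n) (2 * n)
      (sol2 (oneGap n 0) (2 ^ (n - 1)) (oneGap n (n - 2)) 1) k = 2 ^ k := fun k hk => by
    have hadd := h.supportMap_add (k := 0) (a := k) fun j hj => by
      rw [wrapSet_sol2_oneGap hn (by omega), if_neg (by omega), if_neg (by omega)]
    rwa [zero_add, hzero, mul_one] at hadd
  split_ifs with hkn
  · exact hfirst k hkn
  · have hturn := h.two_mul_supportMap n
    rw [hfirst n le_rfl, wrapSet_sol2_oneGap hn (by omega), if_pos rfl, sum_singleton] at hturn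
    have hgap := oneGap_add (i := 0) (by omega : 0 < n)
    have hadd := h.supportMap_add (k := n + 1) (a := k - (n + 1)) fun j hj => by
      rw [wrapSet_sol2_oneGap hn (by omega), if_neg (by omega), if_neg (by omega)]
    rw [show n + 1 + (k - (n + 1)) = k by omega] at hadd
    rw [hadd, mul_comm]
    congr 1
    omega

theorem irreducibleSol_sol2_oneGap (hn : 3 ≤ n) :
    IrreducibleSol (oddD n) (2 * n) (sol2 (oneGap n 0) (2 ^ (n - 1)) (oneGap n (n - 2)) 1) := by
  have hne : ∀ i j, 2 ^ i * 3 ≠ 2 ^ j := fun i j h => by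
    have := (eq_one_and_eq_of_two_pow_mul_odd_eq (by decide) h).1
    omega
  intro i hi j hj h
  rw [coe_range, Set.mem_Iio] at hi hj
  rw [supportMap_sol2_oneGap hn hi, supportMap_sol2_oneGap hn hj] at h
  split_ifs at h with h1 h2 h2
  · exact Nat.pow_right_injective le_rfl h
  · exact absurd (by rw [h, mul_comm]) (hne (j - (n + 1)) i)
  · exact absurd (by rw [← h, mul_comm]) (hne (i - (n + 1)) j)
  · have := Nat.pow_right_injective le_rfl (Nat.eq_of_mul_eq_mul_left three_pos h)
    omega

end MinimalSolutions

section Uniqueness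

variable {D : Finset ℕ} {ℓ n : ℕ} {U V : ℕ → ℕ}

theorem IrreducibleSol.dvd_of_supportMap_add_eq (hirr : IrreducibleSol D ℓ U)
    (h : IsSolution D ℓ U) {k m : ℕ} (hkm : supportMap D ℓ U (k + m) = supportMap D ℓ U k) :
    ℓ ∣ m := by
  have hmem : ∀ j, j % ℓ ∈ (range ℓ : Set ℕ) := fun j =>
    mem_coe.2 (mem_range.2 (Nat.mod_lt j h.len_pos))
  rw [← h.periodic_supportMap.map_mod_nat, ← h.periodic_supportMap.map_mod_nat k] at hkm
  have hmod : k + m ≡ k + 0 [MOD ℓ] := hirr (hmem _) (hmem _) hkm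
  exact (Nat.modEq_zero_iff_dvd).1 (Nat.ModEq.add_left_cancel' k hmod)

theorem IsSolution.isShiftOf_of_wrapSet_add_eq (hU : IsSolution D ℓ U) (hV : IsSolution D ℓ V)
    {k : ℕ} (h : ∀ j < ℓ, wrapSet D ℓ U (k + j) = wrapSet D ℓ V j) : IsShiftOf ℓ U V := by
  have hshift : (fun d => (shift2 ℓ)^[k] (U d)) = V :=
    (hU.shift_iterate k).eq_of_wrapSet_eq hV fun j hj => by
      rw [wrapSet_shift, add_comm j k, h j hj]
  refine ⟨k * (ℓ - 1), fun d => ?_⟩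
  have hsum : k * (ℓ - 1) + k = k * ℓ := by
    rw [← Nat.mul_succ, Nat.succ_eq_add_one, Nat.sub_add_cancel hU.len_pos]
  rw [← hshift, ← Function.iterate_add_apply, hsum]
  exact ((isPeriodicPt_shift2 (hU.lt_two_pow d)).const_mul k).eq.symm

theorem isShiftOf_of_mul_weight_eq (hn : 3 ≤ n) (h : IsSolution (oddD n) ℓ U)
    (hirr : IrreducibleSol (oddD n) ℓ U) (hmin : n * weight (oddD n) U = ℓ) :
    (ℓ = n ∧ IsShiftOf n U (sol1 (oneGap n (n - 1)))) ∨
      (ℓ = 2 * n ∧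
        IsShiftOf (2 * n) U (sol2 (oneGap n 0) (2 ^ (n - 1)) (oneGap n (n - 2)) 1)) := by
  have hstep := h.minimalStep hmin
  have hndvd : n ∣ ℓ := ⟨_, hmin.symm⟩
  obtain ⟨k, hk⟩ := exists_eq_one_of_minimalStep (by omega) hstep (h.supportMap_pos 0)
  rcases return_of_eq_one (by omega) hstep hk with ⟨hback, hE⟩ | ⟨hne, hback, hE⟩
  · obtain rfl : ℓ = n :=
      (hirr.dvd_of_supportMap_add_eq h (hback.trans hk.symm)).antisymm hndvd
    have hsol := isSolution_sol1_oneGap (n := ℓ) (by omega)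
    refine .inl ⟨rfl, h.isShiftOf_of_wrapSet_add_eq hsol (k := k) fun j hj => ?_⟩
    rw [hE j hj, wrapSet_sol1 hsol (oneGap_mem_oddD (by omega)) hj]
  · obtain rfl : ℓ = 2 * n := by
      obtain ⟨w, rfl⟩ := hndvd
      have hdvd := hirr.dvd_of_supportMap_add_eq h (hback.trans hk.symm)
      have hw : w ∣ 2 := Nat.dvd_of_mul_dvd_mul_left (by omega : 0 < n) (by rwa [mul_comm n 2])
      obtain rfl | rfl := (Nat.dvd_prime Nat.prime_two).1 hw
      · exact absurd ((h.periodic_supportMap k).trans hk) (by simpa using hne)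
      · exact mul_comm n 2
    have hsol := isSolution_sol2_oneGap hn
    refine .inr ⟨rfl, h.isShiftOf_of_wrapSet_add_eq hsol (k := k) fun j hj => ?_⟩
    rw [hE j hj, wrapSet_sol2_oneGap hn hj]

end Uniqueness

theorem minimal_density_solutions_general {n : ℕ} (hn : 3 ≤ n) :
    (∀ ℓ U, IsSolution (oddD n) ℓ U → ℓ ≤ n * weight (oddD n) U) ∧
    (IsSolution (oddD n) n (sol1 (2 ^ n - 1)) ∧
      IrreducibleSol (oddD n) n (sol1 (2 ^ n - 1)) ∧
      n * weight (oddD n) (sol1 (2 ^ n - 1)) = n) ∧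
    (IsSolution (oddD n) (2 * n) (sol2 (2 ^ (n + 1) - 3) (2 ^ (n - 1)) (3 * 2 ^ (n - 1) - 1) 1) ∧
      IrreducibleSol (oddD n) (2 * n)
        (sol2 (2 ^ (n + 1) - 3) (2 ^ (n - 1)) (3 * 2 ^ (n - 1) - 1) 1) ∧
      n * weight (oddD n) (sol2 (2 ^ (n + 1) - 3) (2 ^ (n - 1)) (3 * 2 ^ (n - 1) - 1) 1) = 2 * n) ∧
    (∀ ℓ U, IsSolution (oddD n) ℓ U → IrreducibleSol (oddD n) ℓ U →
      n * weight (oddD n) U = ℓ →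
      (ℓ = n ∧ IsShiftOf n U (sol1 (2 ^ n - 1))) ∨
      (ℓ = 2 * n ∧
        IsShiftOf (2 * n) U (sol2 (2 ^ (n + 1) - 3) (2 ^ (n - 1)) (3 * 2 ^ (n - 1) - 1) 1))) := by
  have hmem : ∀ i < n, oneGap n i ∈ oddD n := fun i => oneGap_mem_oddD
  rw [← oneGap_zero, ← oneGap_sub_one (by omega), ← oneGap_sub_two (by omega)]
  refine ⟨fun ℓ U h => h.length_le_mul_weight fun _ => s2_le_of_mem_oddD,
    ⟨isSolution_sol1_oneGap (by omega), irreducibleSol_sol1_oneGap, ?_⟩,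
    ⟨isSolution_sol2_oneGap hn, irreducibleSol_sol2_oneGap hn, ?_⟩,
    fun ℓ U h hirr hmin => isShiftOf_of_mul_weight_eq hn h hirr hmin⟩
  · rw [weight_sol1 (hmem _ (by omega)), s2_one, mul_one]
  · rw [weight_sol2 (hmem _ (by omega)) (hmem _ (by omega))
      (oneGap_ne (by omega) (by omega) (by omega)), s2_two_pow, s2_one, mul_comm]

/-- For `n` large enough and `D = {i : 1 ≤ i ≤ 2^{n+1} − 3, i odd}`: every irreducible
solution has density at least `1/n` (`n·s(U) ≥ ℓ`), and the irreducible solutions of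
density exactly `1/n` are exactly, up to shift, `1·(2^n − 1)` (length `n`) and
`2^{n−1}·(2^{n+1} − 3) + 1·(3·2^{n−1} − 1) = 2^{2n} − 1` (length `2n`). -/
theorem minimal_density_solutions :
    ∃ N : ℕ, ∀ n : ℕ, N ≤ n →
      (∀ ℓ U, IsSolution (oddD n) ℓ U → IrreducibleSol (oddD n) ℓ U →
        ℓ ≤ n * weight (oddD n) U) ∧
      (IsSolution (oddD n) n (sol1 (2 ^ n - 1)) ∧
        IrreducibleSol (oddD n) n (sol1 (2 ^ n - 1)) ∧
        n * weight (oddD n) (sol1 (2 ^ n - 1)) = n) ∧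
      (IsSolution (oddD n) (2 * n) (sol2 (2 ^ (n + 1) - 3) (2 ^ (n - 1)) (3 * 2 ^ (n - 1) - 1) 1) ∧
        IrreducibleSol (oddD n) (2 * n) (sol2 (2 ^ (n + 1) - 3) (2 ^ (n - 1)) (3 * 2 ^ (n - 1) - 1) 1) ∧
        n * weight (oddD n) (sol2 (2 ^ (n + 1) - 3) (2 ^ (n - 1)) (3 * 2 ^ (n - 1) - 1) 1) = 2 * n) ∧
      (∀ ℓ U, IsSolution (oddD n) ℓ U → IrreducibleSol (oddD n) ℓ U →
        n * weight (oddD n) U = ℓ →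
        (ℓ = n ∧ IsShiftOf n U (sol1 (2 ^ n - 1))) ∨
        (ℓ = 2 * n ∧
          IsShiftOf (2 * n) U (sol2 (2 ^ (n + 1) - 3) (2 ^ (n - 1)) (3 * 2 ^ (n - 1) - 1) 1))) :=
  ⟨3, fun _ hn => (minimal_density_solutions_general hn).imp_left fun h ℓ U hU _ => h ℓ U hU⟩
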